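/- Define C_n(0) := −γ_n + Σ_{k=0}^n (n−k)! γ_k c_{2n−2k+1} for n ≥ 0. Then for every integer N ≥ 0, as the positive integer m → ∞, e^{−m} Σ_{k=0}^{m−1} m^k/k! = 1/2 + (1/√(2πm)) ( Σ_{n=0}^{N−1} C_n(0) m^{−n} + O(m^{−N}) ); in particular C_0(0) = −1/3, C_1(0) = −1/540, C_2(0) = 25/6048, C_3(0) = 101/155520. -/

import Mathlib

open Finset

/-- The unsigned Stirling numbers of the first kind. -/
def stirling1 : ℕ → ℕ → ℕ
  | 0, 0 => 1
  | 0, _ + 1 => 0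
  | _ + 1, 0 => 0
  | n + 1, j + 1 => stirling1 n j + n * stirling1 n (j + 1)

/-- Generalized binomial coefficient `C(ρ, k) = ρ(ρ-1)⋯(ρ-k+1)/k!` for real `ρ`. -/
noncomputable def gbinomR (ρ : ℝ) (k : ℕ) : ℝ :=
  (∏ i ∈ Finset.range k, (ρ - i)) / (Nat.factorial k : ℝ)

/-- The formal power series `F(x) = 2(x - log(1+x))/x² = ∑_{m≥0} 2(-1)^m x^m/(m+2)`. -/
noncomputable def F : PowerSeries ℝ :=
  PowerSeries.mk fun m => 2 * (-1 : ℝ) ^ m / ((m : ℝ) + 2)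

/-- For real `ρ`, the formal power series `F^ρ := ∑_{k≥0} C(ρ,k) (F-1)^k`; since `F - 1`
has zero constant term, the coefficient of `x^n` only involves `k ≤ n`. -/
noncomputable def Fpow (ρ : ℝ) : PowerSeries ℝ :=
  PowerSeries.mk fun n =>
    ∑ k ∈ Finset.range (n + 1), gbinomR ρ k * PowerSeries.coeff (R := ℝ) n ((F - 1) ^ k)

/-- The `n`-th Stirling coefficient:
`γ_n = ((-1)^n (2n)!/(2^n n!)) · [x^{2n}] F^{-(n+1/2)}`. -/
noncomputable def stirlingCoeff (n : ℕ) : ℝ :=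
  ((-1 : ℝ) ^ n * (Nat.factorial (2 * n) : ℝ) / (2 ^ n * (Nat.factorial n : ℝ))) *
    PowerSeries.coeff (R := ℝ) (2 * n) (Fpow (-((n : ℝ) + 1 / 2)))
/-- Partial ordinary Bell polynomials: `obell f n k` is the coefficient of `x^n` in
`(∑_{m ≥ 1} f m * x^m)^k`, i.e. `B_{n,k}(f₁, …, f_{n-k+1})`. -/
noncomputable def obell (f : ℕ → ℝ) (n k : ℕ) : ℝ :=
  PowerSeries.coeff (R := ℝ) n ((PowerSeries.mk fun m => if m = 0 then 0 else f m) ^ k)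

/-- The coefficients of the asymptotic expansion of `∫_0^∞ e^{-λ(x - log(1+x))} dx`:
`c_n = (1/(2Γ((n+1)/2))) ∑_{k=0}^n ((-1)^k 2^{(n+1)/2+k}/k!) Γ((n+1)/2+k)
B_{n,k}(a₁,…,a_{n-k+1})` with `a_m = (-1)^m/(m+2)`. -/
noncomputable def laplaceCoeff (n : ℕ) : ℝ :=
  (1 / (2 * Real.Gamma (((n : ℝ) + 1) / 2))) *
    ∑ k ∈ Finset.range (n + 1),
      ((-1 : ℝ) ^ k * (2 : ℝ) ^ (((n : ℝ) + 1) / 2 + k) / (Nat.factorial k : ℝ)) *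
        Real.Gamma (((n : ℝ) + 1) / 2 + k) *
        obell (fun m => (-1 : ℝ) ^ m / ((m : ℝ) + 2)) n k

open Asymptotics Filter

/-- The coefficients `C_n(0) = -γ_n + ∑_{k=0}^n (n-k)! γ_k c_{2n-2k+1}` in the asymptotic
expansion of `Γ(m,m)/Γ(m)`. -/
noncomputable def C₀ (n : ℕ) : ℝ :=
  -stirlingCoeff n +
    ∑ k ∈ Finset.range (n + 1),
      (Nat.factorial (n - k) : ℝ) * stirlingCoeff k * laplaceCoeff (2 * n - 2 * k + 1)

/-!
Let `u = e^{-m} m^m / m!` and `Q = e^{-m} ∑_{k<m} m^k / k!`. Integrating `((1 + x) e^{-x})^m` over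
`x > 0` and over `x < 0` and subtracting gives `(2 / m) ((Q - 1/2) / u + 1)`, since
`x ↦ Γ(m + 1, m (1 + x))` is a primitive up to a constant factor; and Fourier inversion of the
Gamma density gives `2πu` as the integral of `(e^{is} / (1 + is))^m` over the real line, on which
the inverse of `(1 + x) e^{-x}` appears at `x = is`.
Each of these integrals runs along a ray `x = ωs` with `ω ∈ {1, -1, ±i}` and has the integrand
`exp (-(s² / 2) F(ωs)) ^ m`, so one application of Laplace's method expands them all, the `n`-th
coefficient being `ωⁿ Γ((n + 1) / 2) c_n`. In the difference along the real axis only the odd `n`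
survive, with coefficients `j! c_{2j+1}`; along the imaginary axis only the even `n` survive, and
`Γ(n + 1/2) c_{2n}` is the Stirling coefficient `γ_n` up to the factor `(-1)ⁿ √(2π) / 2`.
Multiplying the expansions of `√(2πm) u` and `(Q - 1/2) / u` gives `C_n(0)`.
-/

open MeasureTheory Topology
open scoped PowerSeries Polynomial

/-! ### Asymptotic expansions -/

section HasAsymptoticExpansion

variable {α β 𝕜 : Type*} [NormedField 𝕜] {l : Filter α} {t f g : α → 𝕜} {P Q : 𝕜⟦X⟧}

/-- `f` has the (Poincaré) asymptotic expansion `∑ Pₙ tⁿ` along `l`, the expansion parameter `t`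
being a function on the same type, so that `s → 0⁺` and `m → ∞` with `t = m⁻¹` are both covered. -/
def HasAsymptoticExpansion (f : α → 𝕜) (P : 𝕜⟦X⟧) (t : α → 𝕜) (l : Filter α) : Prop :=
  ∀ K, (fun x => f x - (P.trunc K).eval (t x)) =O[l] fun x => t x ^ K

theorem isBigO_eval_of_tendsto_zero (ht : Tendsto t l (𝓝 0)) (p : 𝕜[X]) :
    (fun x => p.eval (t x)) =O[l] fun _ => (1 : 𝕜) :=
  ((p.continuous.tendsto 0).comp ht).isBigO_one 𝕜

theorem isBigO_eval_of_X_pow_dvd (ht : Tendsto t l (𝓝 0)) {p : 𝕜[X]} {K : ℕ}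
    (hp : Polynomial.X ^ K ∣ p) : (fun x => p.eval (t x)) =O[l] fun x => t x ^ K := by
  obtain ⟨q, rfl⟩ := hp
  simpa using (isBigO_refl (fun x => t x ^ K) l).mul (isBigO_eval_of_tendsto_zero ht q)

namespace HasAsymptoticExpansion

theorem congr' (hf : HasAsymptoticExpansion f P t l) (hfg : f =ᶠ[l] g) :
    HasAsymptoticExpansion g P t l := fun K =>
  (hf K).congr' (hfg.mono fun x hx => by simp only [hx]) .rfl

theorem comp_tendsto {l' : Filter β} {u : β → α} (hf : HasAsymptoticExpansion f P t l)
    (hu : Tendsto u l' l) : HasAsymptoticExpansion (f ∘ u) P (t ∘ u) l' := fun K =>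
  (hf K).comp_tendsto hu

theorem isBigO_one (hf : HasAsymptoticExpansion f P t l) : f =O[l] fun _ => (1 : 𝕜) := by
  simpa using hf 0

theorem of_eval (ht : Tendsto t l (𝓝 0)) (p : 𝕜[X]) :
    HasAsymptoticExpansion (fun x => p.eval (t x)) p t l := fun K => by
  simp_rw [← Polynomial.eval_sub]
  refine isBigO_eval_of_X_pow_dvd ht (Polynomial.X_pow_dvd_iff.2 fun d hd => ?_)
  simp [PowerSeries.coeff_trunc, hd]

theorem sub (hf : HasAsymptoticExpansion f P t l) (hg : HasAsymptoticExpansion g Q t l) :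
    HasAsymptoticExpansion (fun x => f x - g x) (P - Q) t l := fun K => by
  refine ((hf K).sub (hg K)).congr_left fun x => ?_
  rw [PowerSeries.trunc_sub, Polynomial.eval_sub]
  ring

theorem mul (ht : Tendsto t l (𝓝 0)) (hf : HasAsymptoticExpansion f P t l)
    (hg : HasAsymptoticExpansion g Q t l) :
    HasAsymptoticExpansion (fun x => f x * g x) (P * Q) t l := fun K => by
  have hPQ : Polynomial.X ^ K ∣ P.trunc K * Q.trunc K - (P * Q).trunc K := by
    refine Polynomial.X_pow_dvd_iff.2 fun d hd => ?_
    rw [Polynomial.coeff_sub, PowerSeries.coeff_trunc, if_pos hd,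
      PowerSeries.coeff_mul_eq_coeff_trunc_mul_trunc P Q hd, ← Polynomial.coe_mul,
      Polynomial.coeff_coe, sub_self]
  have hleft := (hf K).mul hg.isBigO_one
  have hright := (isBigO_eval_of_tendsto_zero ht (P.trunc K)).mul (hg K)
  simp only [mul_one, one_mul] at hleft hright
  refine ((hleft.add hright).add (isBigO_eval_of_X_pow_dvd ht hPQ)).congr_left fun x => ?_
  rw [Polynomial.eval_sub, Polynomial.eval_mul]
  ring

theorem const_mul (ht : Tendsto t l (𝓝 0)) (c : 𝕜) (hf : HasAsymptoticExpansion f P t l) :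
    HasAsymptoticExpansion (fun x => c * f x) (PowerSeries.C c * P) t l := by
  simpa using (of_eval ht (Polynomial.C c)).mul ht hf

theorem pow (ht : Tendsto t l (𝓝 0)) (hf : HasAsymptoticExpansion f P t l) :
    ∀ n : ℕ, HasAsymptoticExpansion (fun x => f x ^ n) (P ^ n) t l
  | 0 => by simpa using of_eval ht 1
  | n + 1 => by simpa only [pow_succ] using (pow ht hf n).mul ht hf

theorem div (ht : ∀ᶠ x in l, t x ≠ 0) (hf : HasAsymptoticExpansion f (PowerSeries.X * P) t l) :
    HasAsymptoticExpansion (fun x => f x / t x) P t l := fun K => by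
  have htrunc : (PowerSeries.X * P).trunc (K + 1) = Polynomial.X * P.trunc K := by
    ext (_ | n) <;> simp [PowerSeries.coeff_trunc, PowerSeries.coeff_succ_X_mul]
  refine ((hf (K + 1)).mul (isBigO_refl (fun x => (t x)⁻¹) l)).congr' ?_ ?_
  · filter_upwards [ht] with x hx
    rw [htrunc, Polynomial.eval_mul, Polynomial.eval_X]
    field_simp
  · filter_upwards [ht] with x hx
    rw [pow_succ, mul_inv_cancel_right₀ hx]

theorem rescale {c : 𝕜} (hf : HasAsymptoticExpansion f P (fun x => c * t x) l) :
    HasAsymptoticExpansion f (PowerSeries.rescale c P) t l := fun K => by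
  have hbound : (fun x => (c * t x) ^ K) =O[l] fun x => t x ^ K := by
    simpa only [mul_pow] using (isBigO_refl (fun x => t x ^ K) l).const_mul_left (c ^ K)
  refine ((hf K).trans hbound).congr_left fun x => ?_
  simp only [Polynomial.eval, PowerSeries.eval₂_trunc_eq_sum_range, PowerSeries.coeff_rescale]
  congr 1
  exact Finset.sum_congr rfl fun n _ => by simp; ring

theorem of_even (hf : HasAsymptoticExpansion f P t l)
    (heven : ∀ n, P.coeff (2 * n) = Q.coeff n) (hodd : ∀ n, P.coeff (2 * n + 1) = 0) :
    HasAsymptoticExpansion f Q (fun x => t x ^ 2) l := fun K => by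
  have heval (y : 𝕜) : (P.trunc (2 * K)).eval y = (Q.trunc K).eval (y ^ 2) := by
    simp only [Polynomial.eval, PowerSeries.eval₂_trunc_eq_sum_range, RingHom.id_apply]
    induction K with
    | zero => simp
    | succ K ih =>
      simp [mul_add, Finset.sum_range_succ, ih, heven, hodd, pow_mul]
  exact (hf (2 * K)).congr (fun x => by rw [heval]) fun x => pow_mul (t x) 2 K

theorem re {f : α → ℂ} {P : ℂ⟦X⟧} {t : α → ℝ}
    (hf : HasAsymptoticExpansion f P (fun x => (t x : ℂ)) l) :
    HasAsymptoticExpansion (fun x => (f x).re) (.mk fun n => (P.coeff n).re) t l := fun K => by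
  have hnorm : (fun x => (f x - (P.trunc K).eval (t x : ℂ)).re) =O[l] fun x => t x ^ K := by
    refine (IsBigO.of_norm_le fun x => Complex.abs_re_le_norm _).trans ((hf K).norm_left.trans ?_)
    exact IsBigO.of_norm_left (isBigO_of_le _ fun x => by simp)
  refine hnorm.congr_left fun x => ?_
  simp only [Polynomial.eval, PowerSeries.eval₂_trunc_eq_sum_range, RingHom.id_apply,
    Complex.sub_re, Complex.re_sum, PowerSeries.coeff_mk]
  congr 1
  exact Finset.sum_congr rfl fun n _ => by rw [← Complex.ofReal_pow, Complex.re_mul_ofReal]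

end HasAsymptoticExpansion

end HasAsymptoticExpansion

/-! ### Laplace's method -/

section LaplaceMethod

variable {h w : ℝ → ℂ} {P : ℂ⟦X⟧}

/-- The approximation of `exp (-a * (1 + h s))` obtained by expanding `exp (-a * h s)` up to order
`K` and replacing every power of `h` by the truncation of its asymptotic expansion `P ^ k`. -/
noncomputable def gaussianApprox (P : ℂ⟦X⟧) (K : ℕ) (a s : ℝ) : ℂ :=
  Complex.exp (-a) *
    ∑ k ∈ range K, (-a : ℂ) ^ k / (k.factorial : ℂ) * ((P ^ k).trunc K).eval (s : ℂ)

theorem tendsto_ofReal_nhdsGT_zero : Tendsto (fun s : ℝ => (s : ℂ)) (𝓝[>] 0) (𝓝 0) :=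
  (Complex.continuous_ofReal.tendsto' 0 0 Complex.ofReal_zero).mono_left nhdsWithin_le_nhds

theorem pow_mul_exp_neg_half_le (k : ℕ) {a : ℝ} (ha : 0 ≤ a) :
    a ^ k * Real.exp (-(a / 2)) ≤ 4 ^ k * k.factorial * Real.exp (-(a / 4)) := by
  have hpow : a ^ k ≤ 4 ^ k * k.factorial * Real.exp (a / 4) := by
    have := Real.pow_div_factorial_le_exp (x := a / 4) (by positivity) k
    rw [div_pow, div_div, div_le_iff₀ (by positivity)] at this
    linarith
  calc a ^ k * Real.exp (-(a / 2))
      ≤ 4 ^ k * k.factorial * Real.exp (a / 4) * Real.exp (-(a / 2)) := by gcongr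
    _ = 4 ^ k * k.factorial * Real.exp (-(a / 4)) := by
      rw [mul_assoc, ← Real.exp_add]
      ring_nf

theorem isBigO_pow_mul_exp_neg (k : ℕ) (l : Filter ℝ) :
    (fun p : ℝ × ℝ => Complex.exp (-p.2) * ((-p.2 : ℂ) ^ k / (k.factorial : ℂ)))
      =O[l ×ˢ 𝓟 (Set.Ici 0)] fun p => Real.exp (-(p.2 / 4)) := by
  refine .of_bound (4 ^ k) (eventually_prod_principal_iff.2 (.of_forall fun _ a ha => ?_))
  rw [Set.mem_Ici] at ha
  rw [norm_mul, norm_div, norm_pow, norm_neg, Complex.norm_natCast, Complex.norm_of_nonneg ha,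
    ← Complex.ofReal_neg, Complex.norm_exp_ofReal, Real.norm_of_nonneg (by positivity), mul_div,
    div_le_iff₀ (by positivity)]
  calc Real.exp (-a) * a ^ k ≤ Real.exp (-(a / 2)) * a ^ k := by gcongr; linarith
    _ ≤ 4 ^ k * Real.exp (-(a / 4)) * k.factorial := by
      linarith [pow_mul_exp_neg_half_le k ha]

theorem isBigO_exp_remainder (hh : h =O[𝓝[>] 0] fun s : ℝ => s) (K : ℕ) :
    (fun p : ℝ × ℝ => Complex.exp (-p.2) *
        (Complex.exp (-p.2 * h p.1) - ∑ k ∈ range K, (-p.2 * h p.1) ^ k / (k.factorial : ℂ)))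
      =O[𝓝[>] 0 ×ˢ 𝓟 (Set.Ici 0)] fun p => p.1 ^ K * Real.exp (-(p.2 / 4)) := by
  obtain ⟨A, hA⟩ := hh.bound
  have hsmall : ∀ᶠ s in 𝓝[>] 0, ‖h s‖ ≤ 1 / 2 :=
    (hh.trans_tendsto (tendsto_id.mono_left nhdsWithin_le_nhds)).norm.eventually_le_const
      (by norm_num)
  refine .of_bound (A ^ K * (4 ^ K * K.factorial)) (eventually_prod_principal_iff.2 ?_)
  filter_upwards [hA, hsmall, self_mem_nhdsWithin] with s hAs hs _ a ha
  rw [Set.mem_Ici] at ha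
  have hnorm : ‖-(a : ℂ) * h s‖ = a * ‖h s‖ := by
    rw [norm_mul, norm_neg, Complex.norm_of_nonneg ha]
  set r := A * ‖s‖ with hr
  have hr0 : 0 ≤ r := (norm_nonneg _).trans hAs
  rw [norm_mul, ← Complex.ofReal_neg, Complex.norm_exp_ofReal, norm_mul, norm_pow,
    Real.norm_of_nonneg (Real.exp_pos _).le, Complex.ofReal_neg]
  calc Real.exp (-a) * ‖Complex.exp (-a * h s) - ∑ k ∈ range K, (-a * h s) ^ k / (k.factorial : ℂ)‖
      ≤ Real.exp (-a) * ((a * ‖h s‖) ^ K * Real.exp (a * ‖h s‖)) := by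
        gcongr
        simpa only [hnorm] using Complex.norm_exp_sub_sum_le_norm_mul_exp (-a * h s) K
    _ ≤ Real.exp (-a) * ((a * r) ^ K * Real.exp (a * (1 / 2))) := by gcongr
    _ = r ^ K * (a ^ K * Real.exp (-(a / 2))) := by
        rw [show -(a / 2) = -a + a * (1 / 2) by ring, Real.exp_add]
        ring
    _ ≤ r ^ K * (4 ^ K * K.factorial * Real.exp (-(a / 4))) := by
        exact mul_le_mul_of_nonneg_left (pow_mul_exp_neg_half_le K ha) (by positivity)
    _ = A ^ K * (4 ^ K * K.factorial) * (‖s‖ ^ K * Real.exp (-(a / 4))) := by rw [hr]; ring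

theorem isBigO_exp_sub_gaussianApprox
    (hh : HasAsymptoticExpansion h P (fun s : ℝ => (s : ℂ)) (𝓝[>] 0))
    (hP : PowerSeries.constantCoeff P = 0) (K : ℕ) :
    (fun p : ℝ × ℝ => Complex.exp (-(p.2 * (1 + h p.1))) - gaussianApprox P K p.2 p.1)
      =O[𝓝[>] 0 ×ˢ 𝓟 (Set.Ici 0)] fun p => p.1 ^ K * Real.exp (-(p.2 / 4)) := by
  have hlinear : h =O[𝓝[>] 0] fun s : ℝ => s := by
    have h1 := hh 1
    simp only [PowerSeries.trunc_one_left, PowerSeries.coeff_zero_eq_constantCoeff_apply, hP,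
      map_zero, Polynomial.eval_zero, sub_zero, pow_one] at h1
    exact h1.trans (isBigO_of_le _ fun s => by simp)
  have hterm (k : ℕ) :
      (fun p : ℝ × ℝ => Complex.exp (-p.2) * ((-p.2 : ℂ) ^ k / (k.factorial : ℂ)) *
          (h p.1 ^ k - ((P ^ k).trunc K).eval (p.1 : ℂ)))
        =O[𝓝[>] 0 ×ˢ 𝓟 (Set.Ici 0)] fun p => p.1 ^ K * Real.exp (-(p.2 / 4)) := by
    have hpow := ((hh.pow tendsto_ofReal_nhdsGT_zero k K).comp_tendsto
      (tendsto_fst (g := 𝓟 (Set.Ici (0 : ℝ))))).trans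
      (isBigO_of_le (g := fun p : ℝ × ℝ => p.1 ^ K) _ fun p => by simp)
    exact ((isBigO_pow_mul_exp_neg k _).mul hpow).congr_right fun p => mul_comm _ _
  refine ((isBigO_exp_remainder hlinear K).add
    (IsBigO.fun_sum (s := range K) fun k _ => hterm k)).congr_left fun p => ?_
  have hsum : ∑ k ∈ range K, Complex.exp (-p.2) * ((-p.2 : ℂ) ^ k / (k.factorial : ℂ)) *
        (h p.1 ^ k - ((P ^ k).trunc K).eval (p.1 : ℂ)) =
      Complex.exp (-p.2) * (∑ k ∈ range K, (-p.2 * h p.1) ^ k / (k.factorial : ℂ)) -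
        gaussianApprox P K p.2 p.1 := by
    rw [gaussianApprox, ← mul_sub, ← Finset.sum_sub_distrib, Finset.mul_sum]
    exact Finset.sum_congr rfl fun k _ => by rw [mul_pow]; ring
  rw [hsum, show -((p.2 : ℂ) * (1 + h p.1)) = -p.2 + -p.2 * h p.1 by ring, Complex.exp_add]
  ring

theorem isBigO_gaussianApprox (P : ℂ⟦X⟧) (K : ℕ) {δ : ℝ} (hδ : 0 < δ) :
    (fun p : ℝ × ℝ => gaussianApprox P K p.2 p.1)
      =O[𝓟 (Set.Ioi δ) ×ˢ 𝓟 (Set.Ici 0)] fun p => p.1 ^ K * Real.exp (-(p.2 / 4)) := by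
  have heval (k : ℕ) : (fun p : ℝ × ℝ => ((P ^ k).trunc K).eval (p.1 : ℂ))
      =O[𝓟 (Set.Ioi δ) ×ˢ 𝓟 (Set.Ici 0)] fun p => p.1 ^ K := by
    simp only [Polynomial.eval, PowerSeries.eval₂_trunc_eq_sum_range, RingHom.id_apply]
    refine IsBigO.fun_sum fun n hn => IsBigO.const_mul_left ?_ _
    refine .of_bound (δ ^ (K - n))⁻¹ (eventually_prod_principal_iff.2 ?_)
    refine eventually_principal.2 fun s hs _ _ => ?_
    have hs0 : 0 < s := hδ.trans hs
    rw [norm_pow, norm_pow, Complex.norm_of_nonneg hs0.le, Real.norm_of_nonneg hs0.le,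
      inv_mul_eq_div, le_div_iff₀ (by positivity), ← pow_mul_pow_sub s (Finset.mem_range.1 hn).le]
    gcongr
    exact hs.le
  refine (IsBigO.fun_sum (s := range K) fun k _ =>
    (isBigO_pow_mul_exp_neg k _).mul (heval k)).congr (fun p => ?_) fun p => mul_comm _ _
  rw [gaussianApprox, Finset.mul_sum]
  exact Finset.sum_congr rfl fun k _ => mul_assoc _ _ _

theorem integrableOn_pow_mul_exp_neg_mul_sq (j : ℕ) {b : ℝ} (hb : 0 < b) :
    IntegrableOn (fun s : ℝ => s ^ j * Real.exp (-(b * s ^ 2))) (Set.Ioi 0) := by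
  have := integrableOn_rpow_mul_exp_neg_mul_sq hb (s := j) (by linarith [j.cast_nonneg (α := ℝ)])
  simpa only [Real.rpow_natCast, neg_mul] using this

theorem integral_pow_mul_exp_neg_mul_sq (j : ℕ) {b : ℝ} (hb : 0 < b) :
    ∫ s : ℝ in Set.Ioi 0, s ^ j * Real.exp (-(b * s ^ 2)) =
      (√b)⁻¹ ^ (j + 1) * (Real.Gamma ((j + 1) / 2) / 2) := by
  have := integral_rpow_mul_exp_neg_mul_rpow two_pos (q := j) (by linarith [j.cast_nonneg (α := ℝ)])
    hb
  simp only [Real.rpow_natCast, Real.rpow_two, neg_mul] at this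
  rw [this, inv_pow, Real.sqrt_eq_rpow, ← Real.rpow_mul_natCast hb.le, ← Real.rpow_neg hb.le]
  push_cast
  ring_nf

/-- The coefficient of `(√m)⁻¹ ^ n` in the expansion of `√m ∫₀^∞ exp (-(s² / 2) (1 + h s)) ^ m ds`
when `h` has the asymptotic expansion `P` at `0⁺`. -/
noncomputable def laplaceMethodCoeff (P : ℂ⟦X⟧) (n : ℕ) : ℂ :=
  ∑ k ∈ range (n + 1), (-1) ^ k / (k.factorial : ℂ) *
    ((√2 ^ (n + 1) / 2 * Real.Gamma ((n + 1) / 2 + k) : ℝ) : ℂ) * (P ^ k).coeff n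

theorem coeff_pow_eq_zero_of_lt {R : Type*} [CommSemiring R] {P : R⟦X⟧}
    (hP : PowerSeries.constantCoeff P = 0) {n k : ℕ} (hnk : n < k) : (P ^ k).coeff n = 0 :=
  PowerSeries.X_pow_dvd_iff.1 (pow_dvd_pow_of_dvd (PowerSeries.X_dvd_iff.2 hP) k) n hnk

theorem sum_range_eq_laplaceMethodCoeff (hP : PowerSeries.constantCoeff P = 0) {n K : ℕ}
    (hnK : n < K) :
    ∑ k ∈ range K, (-1) ^ k / (k.factorial : ℂ) *
        ((√2 ^ (n + 1) / 2 * Real.Gamma ((n + 1) / 2 + k) : ℝ) : ℂ) * (P ^ k).coeff n =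
      laplaceMethodCoeff P n := by
  refine (Finset.sum_subset (Finset.range_mono hnK) fun k _ hk => ?_).symm
  rw [coeff_pow_eq_zero_of_lt hP (by simpa using hk), mul_zero]

/-- `w` is a kernel to whose powers Laplace's method applies: near `0⁺` it is
`exp (-(s² / 2) (1 + h s))` with `h` having the asymptotic expansion `P`, it is bounded by a
constant less than `1` away from `0`, and some power of it is integrable. -/
structure IsLaplaceKernel (w : ℝ → ℂ) (P : ℂ⟦X⟧) : Prop where
  aestronglyMeasurable : AEStronglyMeasurable w (volume.restrict (Set.Ioi 0))
  exists_integrableOn_pow : ∃ p : ℕ, IntegrableOn (fun s => ‖w s‖ ^ p) (Set.Ioi 0)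
  constantCoeff_eq_zero : PowerSeries.constantCoeff P = 0
  exists_exponent : ∃ h : ℝ → ℂ,
    HasAsymptoticExpansion h P (fun s : ℝ => (s : ℂ)) (𝓝[>] 0) ∧
      ∀ᶠ s : ℝ in 𝓝[>] 0, w s = Complex.exp (-(s ^ 2 / 2 * (1 + h s)))
  exists_norm_le : ∀ δ > 0, ∃ q < 1, ∀ s > δ, ‖w s‖ ≤ q

theorem gaussianApprox_eq_sum (P : ℂ⟦X⟧) (K : ℕ) (b s : ℝ) :
    gaussianApprox P K (b * s ^ 2) s =
      ∑ n ∈ range K, ∑ k ∈ range K, (-1) ^ k / (k.factorial : ℂ) * b ^ k * (P ^ k).coeff n *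
        ((s ^ (n + 2 * k) * Real.exp (-(b * s ^ 2)) : ℝ) : ℂ) := by
  rw [Finset.sum_comm, gaussianApprox, Finset.mul_sum]
  refine Finset.sum_congr rfl fun k _ => ?_
  simp only [Polynomial.eval, PowerSeries.eval₂_trunc_eq_sum_range, RingHom.id_apply]
  rw [Finset.mul_sum, Finset.mul_sum]
  refine Finset.sum_congr rfl fun n _ => ?_
  push_cast
  rw [neg_eq_neg_one_mul ((b : ℂ) * s ^ 2), mul_pow (-1), mul_pow, ← neg_eq_neg_one_mul]
  ring

theorem integrableOn_gaussianApprox (P : ℂ⟦X⟧) (K : ℕ) {b : ℝ} (hb : 0 < b) :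
    IntegrableOn (fun s => gaussianApprox P K (b * s ^ 2) s) (Set.Ioi 0) := by
  simp_rw [gaussianApprox_eq_sum]
  exact integrable_finsetSum _ fun n _ => integrable_finsetSum _ fun k _ =>
    (integrableOn_pow_mul_exp_neg_mul_sq _ hb).ofReal.const_mul _

theorem sqrt_mul_integral_pow_mul_exp (n k : ℕ) {m : ℝ} (hm : 0 < m) :
    √m * ((m / 2) ^ k * ∫ s : ℝ in Set.Ioi 0, s ^ (n + 2 * k) * Real.exp (-(m / 2 * s ^ 2))) =
      √2 ^ (n + 1) / 2 * Real.Gamma ((n + 1) / 2 + k) * (√m)⁻¹ ^ n := by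
  have hpow : (m / 2) ^ k = √(m / 2) ^ (2 * k) := by rw [pow_mul, Real.sq_sqrt (by positivity)]
  have hsqrt : √m = √2 * √(m / 2) := by
    rw [← Real.sqrt_mul zero_le_two, mul_div_cancel₀ _ two_ne_zero]
  rw [integral_pow_mul_exp_neg_mul_sq _ (half_pos hm), hpow, hsqrt,
    show (((n + 2 * k : ℕ) : ℝ) + 1) / 2 = (n + 1) / 2 + k by push_cast; ring,
    inv_pow, inv_pow, mul_pow]
  field_simp
  ring

theorem sqrt_mul_integral_gaussianApprox (hP : PowerSeries.constantCoeff P = 0) (K : ℕ) {m : ℝ}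
    (hm : 0 < m) :
    (√m : ℂ) * ∫ s in Set.Ioi 0, gaussianApprox P K (m / 2 * s ^ 2) s =
      ((PowerSeries.mk (laplaceMethodCoeff P)).trunc K).eval ((√m)⁻¹ : ℂ) := by
  have hint (n k : ℕ) : IntegrableOn
      (fun s : ℝ => ((s ^ (n + 2 * k) * Real.exp (-(m / 2 * s ^ 2)) : ℝ) : ℂ)) (Set.Ioi 0) :=
    (integrableOn_pow_mul_exp_neg_mul_sq (n + 2 * k) (half_pos hm)).ofReal
  have hmoment (n k : ℕ) := congrArg (fun x : ℝ => (x : ℂ)) (sqrt_mul_integral_pow_mul_exp n k hm)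
  simp_rw [gaussianApprox_eq_sum]
  rw [integral_finsetSum _ fun n _ => integrable_finsetSum _ fun k _ => (hint n k).const_mul _]
  simp only [Polynomial.eval, PowerSeries.eval₂_trunc_eq_sum_range, RingHom.id_apply,
    PowerSeries.coeff_mk]
  rw [Finset.mul_sum]
  refine Finset.sum_congr rfl fun n hn => ?_
  rw [integral_finsetSum _ fun k _ => (hint n k).const_mul _, Finset.mul_sum,
    ← sum_range_eq_laplaceMethodCoeff hP (Finset.mem_range.1 hn), Finset.sum_mul]
  refine Finset.sum_congr rfl fun k _ => ?_
  rw [integral_const_mul, integral_complex_ofReal]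
  specialize hmoment n k
  push_cast at hmoment ⊢
  linear_combination (-1) ^ k / (k.factorial : ℂ) * (P ^ k).coeff n * hmoment

theorem isBigO_pow_inv_sqrt_pow {q : ℝ} (hq0 : 0 < q) (hq : q < 1) (K : ℕ) :
    (fun m : ℕ => q ^ m) =O[atTop] fun m : ℕ => (√m)⁻¹ ^ K := by
  have hsqrt : (fun m : ℕ => √m) =O[atTop] fun m : ℕ => (m : ℝ) := by
    refine .of_bound 1 ?_
    filter_upwards [eventually_ge_atTop 1] with m hm
    rw [one_mul, Real.norm_of_nonneg (by positivity), Real.norm_of_nonneg (by positivity),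
      Real.sqrt_le_left (by positivity)]
    exact_mod_cast Nat.le_self_pow two_ne_zero m
  have hpow := (isLittleO_pow_const_const_pow_of_one_lt (R := ℝ) K (one_lt_inv₀ hq0 |>.2 hq)).isBigO
  refine (((hsqrt.pow K).trans hpow).inv_rev ?_).congr (fun m => ?_) fun m => (inv_pow _ _).symm
  · filter_upwards [eventually_gt_atTop 0] with m hm h
    exact absurd h (by positivity)
  · rw [inv_pow, inv_inv]

theorem norm_pow_mul_exp_neg_div_four (K m : ℕ) {s : ℝ} (hs : 0 ≤ s) :
    ‖s ^ K * Real.exp (-(m / 2 * s ^ 2 / 4))‖ = s ^ K * Real.exp (-(m / 8 * s ^ 2)) := by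
  rw [Real.norm_of_nonneg (by positivity)]
  ring_nf

namespace IsLaplaceKernel

theorem norm_le_one (hw : IsLaplaceKernel w P) {s : ℝ} (hs : 0 < s) : ‖w s‖ ≤ 1 := by
  obtain ⟨q, hq, hwq⟩ := hw.exists_norm_le (s / 2) (half_pos hs)
  exact (hwq s (half_lt_self hs)).trans hq.le

theorem integrableOn_pow (hw : IsLaplaceKernel w P) {p m : ℕ}
    (hp : IntegrableOn (fun s => ‖w s‖ ^ p) (Set.Ioi 0)) (hpm : p ≤ m) :
    IntegrableOn (fun s => w s ^ m) (Set.Ioi 0) := by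
  refine hp.mono' (hw.aestronglyMeasurable.pow m) ?_
  filter_upwards [ae_restrict_mem measurableSet_Ioi] with s hs
  rw [norm_pow]
  exact pow_le_pow_of_le_one (norm_nonneg _) (hw.norm_le_one hs) hpm

theorem exists_norm_pow_sub_gaussianApprox_le_of_lt (hw : IsLaplaceKernel w P) (K : ℕ) :
    ∃ B δ : ℝ, 0 < δ ∧ ∀ m : ℕ, ∀ s ∈ Set.Ioo 0 δ,
      ‖w s ^ m - gaussianApprox P K (m / 2 * s ^ 2) s‖ ≤
        B * (s ^ K * Real.exp (-(m / 8 * s ^ 2))) := by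
  obtain ⟨h, hh, hwh⟩ := hw.exists_exponent
  obtain ⟨B, hB⟩ := (isBigO_exp_sub_gaussianApprox hh hw.constantCoeff_eq_zero K).bound
  obtain ⟨δ, hδ, hlocal⟩ := (nhdsGT_basis (0 : ℝ)).eventually_iff.1
    ((eventually_prod_principal_iff.1 hB).and hwh)
  refine ⟨B, δ, hδ, fun m s hs => ?_⟩
  obtain ⟨hB, hws⟩ := hlocal hs
  have hpow : w s ^ m = Complex.exp (-(((m / 2 * s ^ 2 : ℝ) : ℂ) * (1 + h s))) := by
    rw [hws, ← Complex.exp_nat_mul]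
    push_cast
    ring_nf
  have hbound := hB (m / 2 * s ^ 2) (Set.mem_Ici.2 (by positivity))
  rwa [norm_pow_mul_exp_neg_div_four K m hs.1.le, ← hpow] at hbound

theorem exists_norm_pow_le (hw : IsLaplaceKernel w P) {δ : ℝ} (hδ : 0 < δ) (p : ℕ) :
    ∃ q : ℝ, 0 < q ∧ q < 1 ∧ ∀ m : ℕ, p ≤ m → ∀ s > δ, ‖w s ^ m‖ ≤ q ^ (m - p) * ‖w s‖ ^ p := by
  obtain ⟨q, hq, hwq⟩ := hw.exists_norm_le δ hδ
  refine ⟨max q (1 / 2), by positivity, max_lt hq one_half_lt_one, fun m hpm s hs => ?_⟩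
  rw [norm_pow, ← pow_sub_mul_pow _ hpm]
  gcongr
  exact (hwq s hs).trans (le_max_left _ _)

theorem exists_norm_pow_sub_gaussianApprox_le (hw : IsLaplaceKernel w P) (p K : ℕ) :
    ∃ B q : ℝ, 0 < q ∧ q < 1 ∧ ∀ m : ℕ, p ≤ m → ∀ s > 0,
      ‖w s ^ m - gaussianApprox P K (m / 2 * s ^ 2) s‖ ≤
        B * (s ^ K * Real.exp (-(m / 8 * s ^ 2))) + q ^ (m - p) * ‖w s‖ ^ p := by
  obtain ⟨B₁, δ, hδ, hnear⟩ := hw.exists_norm_pow_sub_gaussianApprox_le_of_lt K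
  obtain ⟨B₂, hfar⟩ := (isBigO_gaussianApprox P K (half_pos hδ)).bound
  have hfar := eventually_principal.1 (eventually_prod_principal_iff.1 hfar)
  obtain ⟨q, hq0, hq, hpow⟩ := hw.exists_norm_pow_le (half_pos hδ) p
  refine ⟨max B₁ B₂, q, hq0, hq, fun m hpm s hs => ?_⟩
  rcases lt_or_ge s δ with hsδ | hsδ
  · exact ((hnear m s ⟨hs, hsδ⟩).trans (by gcongr; exact le_max_left _ _)).trans
      (le_add_of_nonneg_right (by positivity))
  · have hsδ : δ / 2 < s := (half_lt_self hδ).trans_le hsδ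
    have hgauss := hfar s hsδ (m / 2 * s ^ 2) (Set.mem_Ici.2 (by positivity))
    rw [norm_pow_mul_exp_neg_div_four K m hs.le] at hgauss
    rw [add_comm]
    exact (norm_sub_le _ _).trans
      (add_le_add (hpow m hpm s hsδ) (hgauss.trans (by gcongr; exact le_max_right _ _)))

theorem isBigO_integral_pow_sub_gaussianApprox (hw : IsLaplaceKernel w P) (K : ℕ) :
    (fun m : ℕ => (∫ s in Set.Ioi 0, w s ^ m) -
        ∫ s in Set.Ioi 0, gaussianApprox P K (m / 2 * s ^ 2) s)
      =O[atTop] fun m : ℕ => (√m)⁻¹ ^ (K + 1) := by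
  obtain ⟨p, hp⟩ := hw.exists_integrableOn_pow
  obtain ⟨B, q, hq0, hq, hbound⟩ := hw.exists_norm_pow_sub_gaussianApprox_le p K
  set J := ∫ s in Set.Ioi 0, ‖w s‖ ^ p
  have hgeom : (fun m : ℕ => q ^ (m - p) * J) =O[atTop] fun m : ℕ => (√m)⁻¹ ^ (K + 1) := by
    refine ((isBigO_pow_inv_sqrt_pow hq0 hq (K + 1)).const_mul_left (J / q ^ p)).congr' ?_ .rfl
    filter_upwards [eventually_ge_atTop p] with m hpm
    rw [pow_sub₀ q hq0.ne' hpm]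
    ring
  have hgauss : (fun m : ℕ => B * ((√(m / 8))⁻¹ ^ (K + 1) * (Real.Gamma ((K + 1) / 2) / 2)))
      =O[atTop] fun m : ℕ => (√m)⁻¹ ^ (K + 1) := by
    refine ((isBigO_refl _ _).const_mul_left (B * (√8 ^ (K + 1) * (Real.Gamma ((K + 1) / 2) / 2)))
      ).congr_left fun m => ?_
    rw [Real.sqrt_div m.cast_nonneg, inv_div, div_eq_mul_inv √8, mul_pow]
    ring
  refine (IsBigO.of_bound 1 ?_).trans (hgauss.add hgeom)
  filter_upwards [eventually_ge_atTop p, eventually_gt_atTop 0] with m hpm hm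
  have hm : (0 : ℝ) < m := Nat.cast_pos.2 hm
  rw [← integral_sub (hw.integrableOn_pow hp hpm) (integrableOn_gaussianApprox P K (half_pos hm)),
    ← integral_pow_mul_exp_neg_mul_sq K (by positivity), ← integral_const_mul, ← integral_const_mul,
    ← integral_add (((integrableOn_pow_mul_exp_neg_mul_sq K (by positivity)).const_mul B))
      (hp.const_mul _), one_mul]
  refine (norm_integral_le_of_norm_le ?_ ?_).trans (le_abs_self _)
  · exact (((integrableOn_pow_mul_exp_neg_mul_sq K (by positivity)).const_mul B)).add
      (hp.const_mul _)
  · filter_upwards [ae_restrict_mem measurableSet_Ioi] with s hs using hbound m hpm s hs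

theorem hasAsymptoticExpansion (hw : IsLaplaceKernel w P) :
    HasAsymptoticExpansion (fun m : ℕ => (√m : ℂ) * ∫ s in Set.Ioi 0, w s ^ m)
      (.mk (laplaceMethodCoeff P)) (fun m : ℕ => ((√m)⁻¹ : ℂ)) atTop := fun K => by
  have hdiff := (hw.isBigO_integral_pow_sub_gaussianApprox K).trans
    (isBigO_of_le (g := fun m : ℕ => ((√m)⁻¹ : ℂ) ^ (K + 1)) _ fun m => by simp)
  refine ((isBigO_refl (fun m : ℕ => (√m : ℂ)) atTop).mul hdiff).congr' ?_ ?_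
  · filter_upwards [eventually_gt_atTop 0] with m hm
    rw [mul_sub, ← sqrt_mul_integral_gaussianApprox hw.constantCoeff_eq_zero K (Nat.cast_pos.2 hm)]
  · filter_upwards [eventually_gt_atTop 0] with m hm
    have : (√m : ℂ) ≠ 0 := Complex.ofReal_ne_zero.2 (by positivity)
    rw [pow_succ, mul_comm, mul_assoc, inv_mul_cancel₀ this, mul_one]

end IsLaplaceKernel

end LaplaceMethod

/-! ### The phase function -/

section Phase

theorem coeff_F (n : ℕ) : F.coeff n = 2 * (-1) ^ n / ((n : ℝ) + 2) :=
  PowerSeries.coeff_mk _ _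

theorem constantCoeff_F : PowerSeries.constantCoeff F = 1 := by
  rw [← PowerSeries.coeff_zero_eq_constantCoeff_apply, coeff_F]
  norm_num

/-- The function `2 (z - log (1 + z)) / z² - 1`, whose Taylor series is `F - 1`. -/
noncomputable def phase (z : ℂ) : ℂ := 2 * (z - Complex.log (1 + z)) / z / z - 1

/-- The series `F - 1`, with complex coefficients. -/
noncomputable def phaseSeries : ℂ⟦X⟧ := (F - 1).map Complex.ofRealHom

theorem hasAsymptoticExpansion_log_one_add :
    HasAsymptoticExpansion (fun z => Complex.log (1 + z)) (PowerSeries.log ℂ) id (𝓝 0) := by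
  have hlog : ContinuousAt (fun z => Complex.log (1 + z)) 0 :=
    (continuousAt_const.add continuousAt_id).clog (by simp)
  rintro (_ | K)
  · simpa using hlog.isBigO_one ℂ
  have htrunc (z : ℂ) :
      ((PowerSeries.log ℂ).trunc (K + 1)).eval z = Complex.logTaylor (K + 1) z := by
    rw [Polynomial.eval, PowerSeries.eval₂_trunc_eq_sum_range, Complex.logTaylor]
    refine Finset.sum_congr rfl fun n _ => ?_
    rcases n with _ | n <;> simp
    ring
  have hball : ∀ᶠ z : ℂ in 𝓝 0, ‖z‖ < 1 / 2 :=
    continuous_norm.continuousAt.eventually_lt continuousAt_const (by simp)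
  refine .of_bound (2 / (K + 1)) (hball.mono fun z hz => ?_)
  have hinv : (1 - ‖z‖)⁻¹ ≤ 2 := inv_le_of_inv_le₀ two_pos (by linarith)
  rw [htrunc, id, norm_pow]
  calc ‖Complex.log (1 + z) - Complex.logTaylor (K + 1) z‖
      ≤ ‖z‖ ^ (K + 1) * (1 - ‖z‖)⁻¹ / (K + 1) :=
        Complex.norm_log_sub_logTaylor_le K (by linarith)
    _ ≤ ‖z‖ ^ (K + 1) * 2 / (K + 1) := by gcongr
    _ = 2 / (K + 1) * ‖z‖ ^ (K + 1) := by ring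

theorem two_mul_X_sub_log :
    PowerSeries.C 2 * (PowerSeries.X - PowerSeries.log ℂ) =
      PowerSeries.X * (PowerSeries.X * F.map Complex.ofRealHom) := by
  ext (_ | _ | n)
  · simp
  · simp [PowerSeries.coeff_succ_X_mul]
  · simp [PowerSeries.coeff_succ_X_mul, PowerSeries.coeff_X, coeff_F]
    ring

theorem hasAsymptoticExpansion_phase :
    HasAsymptoticExpansion phase phaseSeries id (𝓝[≠] 0) := by
  have ht : Tendsto (id : ℂ → ℂ) (𝓝 0) (𝓝 0) := tendsto_id
  have ht' : Tendsto (id : ℂ → ℂ) (𝓝[≠] 0) (𝓝 0) := tendsto_id.mono_left nhdsWithin_le_nhds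
  have hne : ∀ᶠ z : ℂ in 𝓝[≠] 0, id z ≠ 0 := self_mem_nhdsWithin
  have hX : HasAsymptoticExpansion (fun z : ℂ => z) PowerSeries.X id (𝓝 0) := by
    simpa using HasAsymptoticExpansion.of_eval ht Polynomial.X
  have hnum := (hX.sub hasAsymptoticExpansion_log_one_add).const_mul ht 2
  rw [two_mul_X_sub_log] at hnum
  have hone : HasAsymptoticExpansion (fun _ : ℂ => (1 : ℂ)) 1 id (𝓝[≠] 0) := by
    simpa using HasAsymptoticExpansion.of_eval ht' 1
  have hquot := ((hnum.comp_tendsto ht').div hne).div hne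
  rw [phaseSeries, map_sub, map_one]
  exact hquot.sub hone

theorem hasAsymptoticExpansion_phase_mul {ω : ℂ} (hω : ω ≠ 0) :
    HasAsymptoticExpansion (fun s : ℝ => phase (ω * s)) (PowerSeries.rescale ω phaseSeries)
      (fun s : ℝ => (s : ℂ)) (𝓝[>] 0) := by
  have hray : Tendsto (fun s : ℝ => ω * s) (𝓝[>] 0) (𝓝[≠] 0) := by
    refine tendsto_nhdsWithin_iff.2
      ⟨by simpa using tendsto_ofReal_nhdsGT_zero.const_mul ω, ?_⟩
    filter_upwards [self_mem_nhdsWithin] with s hs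
    exact mul_ne_zero hω (Complex.ofReal_ne_zero.2 (ne_of_gt hs))
  exact (hasAsymptoticExpansion_phase.comp_tendsto hray).rescale

theorem constantCoeff_phaseSeries : PowerSeries.constantCoeff phaseSeries = 0 := by
  rw [phaseSeries, ← PowerSeries.coeff_zero_eq_constantCoeff_apply, PowerSeries.coeff_map]
  simp [constantCoeff_F]

theorem neg_sq_div_two_mul_one_add_phase {ω : ℂ} (hω : ω ≠ 0) {s : ℝ} (hs : s ≠ 0) :
    -((s : ℂ) ^ 2 / 2 * (1 + phase (ω * s))) = (Complex.log (1 + ω * s) - ω * s) / ω ^ 2 := by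
  have : (s : ℂ) ≠ 0 := Complex.ofReal_ne_zero.2 hs
  rw [phase]
  field_simp
  ring

theorem isLaplaceKernel_of_eq_exp_log {w : ℝ → ℂ} {ω : ℂ} (hω : ω ≠ 0)
    (hmeas : AEStronglyMeasurable w (volume.restrict (Set.Ioi 0)))
    (hint : ∃ p : ℕ, IntegrableOn (fun s => ‖w s‖ ^ p) (Set.Ioi 0))
    (hfar : ∀ δ > 0, ∃ q < 1, ∀ s > δ, ‖w s‖ ≤ q)
    (hw : ∀ᶠ s : ℝ in 𝓝[>] 0, w s = Complex.exp ((Complex.log (1 + ω * s) - ω * s) / ω ^ 2)) :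
    IsLaplaceKernel w (PowerSeries.rescale ω phaseSeries) where
  aestronglyMeasurable := hmeas
  exists_integrableOn_pow := hint
  constantCoeff_eq_zero := by
    rw [← PowerSeries.coeff_zero_eq_constantCoeff_apply, PowerSeries.coeff_rescale,
      PowerSeries.coeff_zero_eq_constantCoeff_apply, constantCoeff_phaseSeries, mul_zero]
  exists_exponent := by
    refine ⟨fun s => phase (ω * s), hasAsymptoticExpansion_phase_mul hω, ?_⟩
    filter_upwards [hw, self_mem_nhdsWithin] with s hs hs0
    rw [hs, neg_sq_div_two_mul_one_add_phase hω (ne_of_gt hs0)]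
  exists_norm_le := hfar

end Phase

/-! ### Laplace and Stirling coefficients -/

theorem coeff_F_sub_one_pow (n k : ℕ) :
    ((F - 1) ^ k).coeff n = 2 ^ k * obell (fun m => (-1) ^ m / ((m : ℝ) + 2)) n k := by
  have hF : F - 1 = PowerSeries.C 2 *
      .mk fun m => if m = 0 then 0 else (-1 : ℝ) ^ m / ((m : ℝ) + 2) := by
    ext (_ | m)
    · simp [constantCoeff_F]
    · simp [coeff_F, PowerSeries.coeff_one]
      ring
  rw [hF, mul_pow, ← map_pow, PowerSeries.coeff_C_mul, obell]

theorem Gamma_mul_laplaceCoeff (n : ℕ) :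
    Real.Gamma ((n + 1) / 2) * laplaceCoeff n =
      ∑ k ∈ range (n + 1), (-1) ^ k / (k.factorial : ℝ) *
        (√2 ^ (n + 1) / 2 * Real.Gamma ((n + 1) / 2 + k)) * ((F - 1) ^ k).coeff n := by
  have hΓ : Real.Gamma ((n + 1) / 2) ≠ 0 := (Real.Gamma_pos_of_pos (by positivity)).ne'
  rw [laplaceCoeff, ← mul_assoc, Finset.mul_sum]
  refine Finset.sum_congr rfl fun k _ => ?_
  have hrpow : (2 : ℝ) ^ (((n : ℝ) + 1) / 2 + k) = √2 ^ (n + 1) * 2 ^ k := by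
    rw [Real.rpow_add_natCast two_ne_zero, Real.sqrt_eq_rpow, ← Real.rpow_mul_natCast zero_le_two]
    push_cast
    ring_nf
  rw [coeff_F_sub_one_pow, hrpow]
  field_simp

theorem laplaceMethodCoeff_rescale_phaseSeries (ω : ℂ) (n : ℕ) :
    laplaceMethodCoeff (PowerSeries.rescale ω phaseSeries) n =
      ω ^ n * ((Real.Gamma ((n + 1) / 2) * laplaceCoeff n : ℝ) : ℂ) := by
  rw [laplaceMethodCoeff, Gamma_mul_laplaceCoeff, Complex.ofReal_sum, Finset.mul_sum]
  refine Finset.sum_congr rfl fun k _ => ?_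
  rw [← map_pow, PowerSeries.coeff_rescale, phaseSeries, ← map_pow, PowerSeries.coeff_map,
    Complex.ofRealHom_eq_coe]
  push_cast
  ring

theorem Gamma_add_natCast {x : ℝ} (hx : 0 < x) (k : ℕ) :
    Real.Gamma (x + k) = Real.Gamma x * ∏ i ∈ range k, (x + i) := by
  induction k with
  | zero => simp
  | succ k ih =>
    rw [Finset.prod_range_succ, ← mul_assoc, ← ih, Nat.cast_succ, ← add_assoc,
      Real.Gamma_add_one (by positivity), mul_comm]

theorem Gamma_mul_gbinomR_neg {x : ℝ} (hx : 0 < x) (k : ℕ) :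
    Real.Gamma x * gbinomR (-x) k = (-1) ^ k / (k.factorial : ℝ) * Real.Gamma (x + k) := by
  have hprod : ∏ i ∈ range k, (-x - (i : ℝ)) = (-1) ^ k * ∏ i ∈ range k, (x + i) := by
    simpa only [Finset.card_range, neg_one_mul, neg_add, sub_eq_add_neg] using
      (Finset.pow_card_mul_prod (s := range k) (b := (-1 : ℝ)) (f := fun i => x + i)).symm
  rw [Gamma_add_natCast hx, gbinomR, hprod]
  ring

theorem Gamma_natCast_add_half (n : ℕ) :
    Real.Gamma (n + 1 / 2) = (2 * n).factorial / (4 ^ n * n.factorial) * √Real.pi := by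
  rcases n with _ | n
  · simpa using Real.Gamma_one_half_eq
  have hfact := Nat.factorial_eq_mul_doubleFactorial (2 * n + 1)
  rw [add_assoc, ← mul_add_one, Nat.doubleFactorial_two_mul] at hfact
  rw [Real.Gamma_nat_add_half, hfact, show 2 * (n + 1) - 1 = 2 * n + 1 by omega,
    show (4 : ℝ) = 2 * 2 by norm_num, mul_pow]
  push_cast
  field_simp

theorem sqrt_two_pi_mul_stirlingCoeff (n : ℕ) :
    √(2 * Real.pi) * stirlingCoeff n =
      2 * ((-1) ^ n * (Real.Gamma (n + 1 / 2) * laplaceCoeff (2 * n))) := by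
  have hΓ := Gamma_mul_laplaceCoeff (2 * n)
  have hn : (((2 * n : ℕ) : ℝ) + 1) / 2 = n + 1 / 2 := by push_cast; ring
  have hFpow : Real.Gamma (n + 1 / 2) * laplaceCoeff (2 * n) =
      √2 ^ (2 * n + 1) / 2 *
        (Real.Gamma (n + 1 / 2) * (Fpow (-((n : ℝ) + 1 / 2))).coeff (2 * n)) := by
    rw [hn] at hΓ
    rw [hΓ, Fpow, PowerSeries.coeff_mk, Finset.mul_sum, Finset.mul_sum]
    refine Finset.sum_congr rfl fun k _ => ?_
    rw [← mul_assoc (Real.Gamma _), Gamma_mul_gbinomR_neg (by positivity)]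
    ring
  rw [hFpow, stirlingCoeff, Gamma_natCast_add_half, Real.sqrt_mul zero_le_two, pow_succ √2,
    pow_mul √2, Real.sq_sqrt zero_le_two, show (4 : ℝ) = 2 * 2 by norm_num, mul_pow]
  field_simp

/-! ### The three branches -/

/-- The real integrand `(1 + x) e^{-x}`, cut off at its zero `x = -1`. -/
noncomputable def realKernel (x : ℝ) : ℝ := max (1 + x) 0 * Real.exp (-x)

/-- The integrand `e^{is} / (1 + is)` on the vertical line through the saddle point, which is
the reciprocal of `(1 + x) e^{-x}` at `x = is`. -/
noncomputable def imaginaryKernel (s : ℝ) : ℂ :=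
  Complex.exp (Complex.I * s) / (1 + Complex.I * s)

theorem realKernel_nonneg (x : ℝ) : 0 ≤ realKernel x := by
  unfold realKernel
  positivity

theorem realKernel_lt_one {x : ℝ} (hx : x ≠ 0) : realKernel x < 1 := by
  rw [realKernel, Real.exp_neg, ← div_eq_mul_inv, div_lt_one (Real.exp_pos x)]
  exact max_lt (by linarith [Real.add_one_lt_exp hx]) (Real.exp_pos x)

theorem realKernel_le_realKernel {x y : ℝ} (h : 0 ≤ y * (x - y)) :
    realKernel x ≤ realKernel y := by
  have hxy : max (1 + x) 0 ≤ max (1 + y) 0 * Real.exp (x - y) := by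
    refine max_le ?_ (by positivity)
    rcases le_total 0 (1 + y) with hy | hy
    · calc 1 + x ≤ (1 + y) * (x - y + 1) := by linarith
        _ ≤ max (1 + y) 0 * Real.exp (x - y) := by
          rw [max_eq_left hy]
          gcongr
          exact Real.add_one_le_exp _
    · have hx : 1 + x ≤ 0 := by nlinarith
      exact hx.trans (by positivity)
  calc realKernel x ≤ max (1 + y) 0 * Real.exp (x - y) * Real.exp (-x) := by
        unfold realKernel
        gcongr
    _ = realKernel y := by
        rw [mul_assoc, ← Real.exp_add, realKernel]
        ring_nf

theorem continuous_imaginaryKernel : Continuous imaginaryKernel := by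
  refine Continuous.div (by fun_prop) (by fun_prop) fun s hs => ?_
  simpa using congrArg Complex.re hs

theorem norm_imaginaryKernel (s : ℝ) : ‖imaginaryKernel s‖ = (√(1 + s ^ 2))⁻¹ := by
  rw [imaginaryKernel, norm_div, mul_comm, Complex.norm_exp_ofReal_mul_I, mul_comm,
    Complex.norm_eq_sqrt_sq_add_sq]
  simp

/-! ### Exact evaluation of the integrals -/

/-- The regularised upper incomplete Gamma function `Γ(n, x) / Γ(n)` for a natural number `n`. -/
noncomputable def gammaQ (n : ℕ) (x : ℝ) : ℝ :=
  Real.exp (-x) * ∑ k ∈ range n, x ^ k / (k.factorial : ℝ)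

/-- The Poisson weight `e^{-m} m^m / m!`, which Stirling's series expands. -/
noncomputable def poissonWeight (m : ℕ) : ℝ :=
  Real.exp (-m) * ((m : ℝ) ^ m / (m.factorial : ℝ))

theorem poissonWeight_pos {m : ℕ} (hm : m ≠ 0) : 0 < poissonWeight m := by
  unfold poissonWeight
  positivity

theorem gammaQ_succ (n : ℕ) (x : ℝ) :
    gammaQ (n + 1) x = gammaQ n x + Real.exp (-x) * (x ^ n / n.factorial) := by
  rw [gammaQ, Finset.sum_range_succ, mul_add, gammaQ]

theorem gammaQ_succ_zero (n : ℕ) : gammaQ (n + 1) 0 = 1 := by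
  simp [gammaQ, Finset.sum_range_succ']

theorem hasDerivAt_gammaQ_succ (n : ℕ) (x : ℝ) :
    HasDerivAt (gammaQ (n + 1)) (-(Real.exp (-x) * (x ^ n / n.factorial))) x := by
  have hexp : HasDerivAt (fun x : ℝ => Real.exp (-x)) (-Real.exp (-x)) x := by
    simpa using (hasDerivAt_neg x).exp
  induction n with
  | zero => simpa [show gammaQ 1 = fun x => Real.exp (-x) by ext; simp [gammaQ]] using hexp
  | succ n ih =>
    have hpow : HasDerivAt (fun x : ℝ => x ^ (n + 1) / ((n + 1).factorial : ℝ))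
        (x ^ n / n.factorial) x := by
      refine ((hasDerivAt_pow (n + 1) x).div_const _).congr_deriv ?_
      rw [Nat.factorial_succ]
      push_cast
      field_simp
    refine ((ih.add (hexp.mul hpow)).congr_deriv (by ring)).congr_of_eventuallyEq
      (.of_forall fun y => ?_)
    exact gammaQ_succ (n + 1) y

theorem tendsto_gammaQ_atTop (n : ℕ) : Tendsto (gammaQ n) atTop (𝓝 0) := by
  have hterm (k : ℕ) (_ : k ∈ range n) :
      Tendsto (fun x : ℝ => Real.exp (-x) * (x ^ k / k.factorial)) atTop (𝓝 0) := by
    have hk := (Real.tendsto_pow_mul_exp_neg_atTop_nhds_zero k).div_const (k.factorial : ℝ)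
    rw [zero_div] at hk
    exact hk.congr fun x => by ring
  have hsum := tendsto_finsetSum (range n) hterm
  rw [Finset.sum_const_zero] at hsum
  exact hsum.congr fun x => by rw [gammaQ, Finset.mul_sum]

theorem hasDerivAt_gammaQ_comp {m : ℕ} (hm : m ≠ 0) {x : ℝ} (hx : -1 ≤ x) :
    HasDerivAt (fun x : ℝ => -(gammaQ (m + 1) (m * (1 + x)) / (m * poissonWeight m)))
      (realKernel x ^ m) x := by
  have hlin : HasDerivAt (fun x : ℝ => (m : ℝ) * (1 + x)) m x := by
    simpa using ((hasDerivAt_id x).const_add 1).const_mul (m : ℝ)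
  refine (((hasDerivAt_gammaQ_succ m _).comp x hlin).div_const _).neg.congr_deriv ?_
  have hexp : Real.exp (-(m * (1 + x))) = Real.exp (-m) * Real.exp (-x) ^ m := by
    rw [← Real.exp_nat_mul, ← Real.exp_add]
    ring_nf
  rw [realKernel, max_eq_left (by linarith), hexp, poissonWeight, mul_pow, mul_pow]
  field_simp

theorem tendsto_gammaQ_comp {m : ℕ} (hm : m ≠ 0) :
    Tendsto (fun x : ℝ => -(gammaQ (m + 1) (m * (1 + x)) / (m * poissonWeight m))) atTop (𝓝 0) := by
  have hlin : Tendsto (fun x : ℝ => (m : ℝ) * (1 + x)) atTop atTop :=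
    (tendsto_atTop_add_const_left _ 1 tendsto_id).const_mul_atTop (by positivity)
  simpa using (((tendsto_gammaQ_atTop (m + 1)).comp hlin).div_const (m * poissonWeight m)).neg

theorem integrableOn_realKernel_pow {m : ℕ} (hm : m ≠ 0) {a : ℝ} (ha : -1 ≤ a) :
    IntegrableOn (fun x => realKernel x ^ m) (Set.Ioi a) :=
  integrableOn_Ioi_deriv_of_nonneg' (fun _ hx => hasDerivAt_gammaQ_comp hm (ha.trans hx))
    (fun x _ => pow_nonneg (realKernel_nonneg x) m) (tendsto_gammaQ_comp hm)

theorem integral_Ioi_realKernel_pow {m : ℕ} (hm : m ≠ 0) {a : ℝ} (ha : -1 ≤ a) :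
    ∫ x in Set.Ioi a, realKernel x ^ m =
      gammaQ (m + 1) (m * (1 + a)) / (m * poissonWeight m) := by
  rw [integral_Ioi_of_hasDerivAt_of_tendsto' (fun _ hx => hasDerivAt_gammaQ_comp hm (ha.trans hx))
    (integrableOn_realKernel_pow hm ha) (tendsto_gammaQ_comp hm), zero_sub, neg_neg]

theorem realKernel_pow_eq_zero {m : ℕ} (hm : m ≠ 0) {x : ℝ} (hx : x ∉ Set.Ioi (-1)) :
    realKernel x ^ m = 0 := by
  have hx' : 1 + x ≤ 0 := by linarith [Set.notMem_Ioi.1 hx]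
  rw [realKernel, max_eq_right hx', zero_mul, zero_pow hm]

theorem integrable_realKernel_pow {m : ℕ} (hm : m ≠ 0) :
    Integrable fun x => realKernel x ^ m :=
  (integrableOn_realKernel_pow hm le_rfl).integrable_of_forall_notMem_eq_zero
    fun _ => realKernel_pow_eq_zero hm

theorem integral_realKernel_pow {m : ℕ} (hm : m ≠ 0) :
    ∫ x, realKernel x ^ m = 1 / (m * poissonWeight m) := by
  rw [← setIntegral_eq_integral_of_forall_compl_eq_zero fun _ => realKernel_pow_eq_zero hm,
    integral_Ioi_realKernel_pow hm le_rfl, add_neg_cancel, mul_zero, gammaQ_succ_zero]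

theorem integral_realKernel_pow_sub_integral_neg {m : ℕ} (hm : m ≠ 0) :
    (∫ s in Set.Ioi 0, realKernel (1 * s) ^ m) - ∫ s in Set.Ioi 0, realKernel (-1 * s) ^ m =
      2 / m * ((gammaQ m m - 1 / 2) / poissonWeight m + 1) := by
  have hint := integrable_realKernel_pow hm
  have hsplit := intervalIntegral.integral_Iic_add_Ioi (b := (0 : ℝ)) hint.integrableOn
    hint.integrableOn
  have hneg := integral_comp_neg_Ioi 0 fun x => realKernel x ^ m
  have hright := integral_Ioi_realKernel_pow hm (a := 0) (by norm_num)
  rw [neg_zero] at hneg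
  rw [add_zero, mul_one, gammaQ_succ, ← poissonWeight] at hright
  rw [integral_realKernel_pow hm, ← hneg, hright] at hsplit
  have hu := (poissonWeight_pos hm).ne'
  simp only [one_mul, neg_one_mul, eq_sub_of_add_eq hsplit, hright]
  field_simp
  ring

theorem integrable_imaginaryKernel_pow {m : ℕ} (hm : 2 ≤ m) :
    Integrable fun s => imaginaryKernel s ^ m := by
  refine integrable_inv_one_add_sq.mono' (continuous_imaginaryKernel.pow m).aestronglyMeasurable
    (.of_forall fun s => ?_)
  have hsqrt : (√(1 + s ^ 2))⁻¹ ≤ 1 := inv_le_one_of_one_le₀ (Real.one_le_sqrt.2 (by nlinarith))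
  calc ‖imaginaryKernel s ^ m‖ = (√(1 + s ^ 2))⁻¹ ^ m := by rw [norm_pow, norm_imaginaryKernel]
    _ ≤ (√(1 + s ^ 2))⁻¹ ^ 2 := pow_le_pow_of_le_one (by positivity) hsqrt hm
    _ = (1 + s ^ 2)⁻¹ := by rw [inv_pow, Real.sq_sqrt (by positivity)]

theorem integrableOn_pow_mul_cexp_neg_mul (n : ℕ) {r : ℂ} (hr : 0 < r.re) :
    IntegrableOn (fun t : ℝ => (t : ℂ) ^ n * Complex.exp (-(r * t))) (Set.Ioi 0) := by
  have h := integrableOn_rpow_mul_exp_neg_mul_rpow (s := n) (by linarith [n.cast_nonneg (α := ℝ)])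
    one_pos hr
  refine h.congr' (by fun_prop) (ae_restrict_of_forall_mem measurableSet_Ioi fun t _ => ?_)
  simp [Complex.norm_exp]

theorem integral_pow_mul_cexp_neg_mul_Ioi {r : ℂ} (hr : 0 < r.re) (n : ℕ) :
    ∫ t in Set.Ioi (0 : ℝ), (t : ℂ) ^ n * Complex.exp (-(r * t)) =
      n.factorial / r ^ (n + 1) := by
  have hr0 : r ≠ 0 := by
    rintro rfl
    simp at hr
  induction n with
  | zero => simpa using integral_exp_mul_complex_Ioi (a := -r) (by simpa using hr) 0
  | succ n ih =>
    have hint := (integrableOn_pow_mul_cexp_neg_mul n hr).const_mul (n + 1 : ℂ)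
    have hint' := (integrableOn_pow_mul_cexp_neg_mul (n + 1) hr).const_mul r
    have hderiv (t : ℝ) : HasDerivAt (fun t : ℝ => (t : ℂ) ^ (n + 1) * Complex.exp (-(r * t)))
        ((n + 1) * ((t : ℂ) ^ n * Complex.exp (-(r * t))) -
          r * ((t : ℂ) ^ (n + 1) * Complex.exp (-(r * t)))) t := by
      have hexp : HasDerivAt (fun t : ℂ => Complex.exp (-(r * t)))
          (Complex.exp (-(r * t)) * -r) t := by
        simpa using ((hasDerivAt_id (t : ℂ)).const_mul r).neg.cexp
      refine (((hasDerivAt_pow (n + 1) (t : ℂ)).mul hexp).comp_ofReal).congr_deriv ?_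
      push_cast
      ring_nf
    have hparts := integral_Ioi_of_hasDerivAt_of_tendsto' (a := 0) (fun t _ => hderiv t)
      (hint.sub hint') (tendsto_zero_of_hasDerivAt_of_integrableOn_Ioi (fun t _ => hderiv t)
        (hint.sub hint') (integrableOn_pow_mul_cexp_neg_mul (n + 1) hr))
    rw [integral_sub hint hint', integral_const_mul, integral_const_mul, ih] at hparts
    simp only [Complex.ofReal_zero, zero_pow n.succ_ne_zero, zero_mul, sub_zero] at hparts
    rw [Nat.factorial_succ]
    push_cast
    field_simp at hparts ⊢
    linear_combination -hparts

/-- The density `t^n e^{-t}` on `t > 0`, extended by zero. -/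
noncomputable def gammaDensity (n : ℕ) : ℝ → ℂ :=
  (Set.Ioi 0).indicator fun t => (t : ℂ) ^ n * Complex.exp (-t)

theorem integrable_gammaDensity (n : ℕ) : Integrable (gammaDensity n) := by
  rw [gammaDensity, integrable_indicator_iff measurableSet_Ioi]
  have h := (Real.GammaIntegral_convergent (s := n + 1) (by positivity)).ofReal (𝕜 := ℂ)
  refine IntegrableOn.congr_fun h (fun t _ => ?_) measurableSet_Ioi
  simp [mul_comm]

theorem fourier_gammaDensity (n : ℕ) (ξ : ℝ) :
    FourierTransform.fourier (gammaDensity n) ξ =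
      n.factorial / (1 + Complex.I * (2 * Real.pi * ξ : ℝ)) ^ (n + 1) := by
  rw [Real.fourier_eq', ← integral_pow_mul_cexp_neg_mul_Ioi (by simp) n,
    ← integral_indicator measurableSet_Ioi]
  congr 1 with t
  by_cases ht : t ∈ Set.Ioi (0 : ℝ)
  · rw [gammaDensity, Set.indicator_of_mem ht, Set.indicator_of_mem ht, smul_eq_mul,
      mul_left_comm, ← Complex.exp_add]
    congr 2
    simp
    ring
  · simp [gammaDensity, Set.indicator_of_notMem ht]

theorem cexp_mul_fourier_gammaDensity (n : ℕ) (ξ : ℝ) :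
    Complex.exp ((n + 1 : ℕ) * (Complex.I * (2 * Real.pi * ξ : ℝ))) *
        FourierTransform.fourier (gammaDensity n) ξ =
      n.factorial * imaginaryKernel (2 * Real.pi * ξ) ^ (n + 1) := by
  rw [fourier_gammaDensity, imaginaryKernel, div_pow, ← Complex.exp_nat_mul]
  ring

theorem integrable_fourier_gammaDensity {n : ℕ} (hn : n ≠ 0) :
    Integrable (FourierTransform.fourier (gammaDensity n)) := by
  have hint := ((integrable_imaginaryKernel_pow (m := n + 1) (by omega)).comp_mul_left'
    Real.two_pi_pos.ne').const_mul (n.factorial : ℂ)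
  refine hint.congr' ?_ (.of_forall fun ξ => ?_)
  · refine Continuous.aestronglyMeasurable ?_
    exact VectorFourier.fourierIntegral_continuous Real.continuous_fourierChar
      continuous_inner (integrable_gammaDensity n)
  · rw [← cexp_mul_fourier_gammaDensity, norm_mul, Complex.norm_exp]
    simp

theorem integral_imaginaryKernel_pow {m : ℕ} (hm : 2 ≤ m) :
    ∫ s, imaginaryKernel s ^ m = (2 * Real.pi * poissonWeight m : ℝ) := by
  obtain ⟨n, rfl⟩ : ∃ n, m = n + 1 := ⟨m - 1, by omega⟩
  have hpos : ((n + 1 : ℕ) : ℝ) ∈ Set.Ioi (0 : ℝ) := Set.mem_Ioi.2 (by positivity)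
  have hcont : ContinuousAt (gammaDensity n) (n + 1 : ℕ) := by
    refine ContinuousAt.congr (f := fun t : ℝ => (t : ℂ) ^ n * Complex.exp (-t)) (by fun_prop) ?_
    filter_upwards [Ioi_mem_nhds hpos] with t ht
    rw [gammaDensity, Set.indicator_of_mem ht]
  have hinv := (integrable_gammaDensity n).fourierInv_fourier_eq
    (integrable_fourier_gammaDensity (by omega)) hcont
  have hintegrand (ξ : ℝ) :
      Complex.exp ((2 * Real.pi * inner ℝ ξ ((n + 1 : ℕ) : ℝ) : ℝ) * Complex.I) •
        FourierTransform.fourier (gammaDensity n) ξ =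
      n.factorial * imaginaryKernel (2 * Real.pi * ξ) ^ (n + 1) := by
    rw [← cexp_mul_fourier_gammaDensity, smul_eq_mul]
    congr 2
    simp
    ring
  rw [Real.fourierInv_eq', integral_congr_ae (.of_forall hintegrand), integral_const_mul,
    Measure.integral_comp_mul_left (fun s => imaginaryKernel s ^ (n + 1)),
    abs_of_pos (by positivity), Complex.real_smul, gammaDensity, Set.indicator_of_mem hpos] at hinv
  have hfact : (n.factorial : ℂ) ≠ 0 := Nat.cast_ne_zero.2 n.factorial_ne_zero
  have hsucc : (n + 1 : ℂ) ≠ 0 := Nat.cast_add_one_ne_zero n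
  rw [poissonWeight, Nat.factorial_succ]
  push_cast at hinv ⊢
  field_simp at hinv ⊢
  linear_combination (n + 1 : ℂ) * hinv

theorem imaginaryKernel_neg (s : ℝ) :
    imaginaryKernel (-s) = starRingEnd ℂ (imaginaryKernel s) := by
  simp [imaginaryKernel, ← Complex.exp_conj]

theorem two_mul_re_integral_Ioi_imaginaryKernel_pow {m : ℕ} (hm : 2 ≤ m) :
    2 * (∫ s in Set.Ioi 0, imaginaryKernel s ^ m).re = 2 * Real.pi * poissonWeight m := by
  have hint := integrable_imaginaryKernel_pow hm
  have hsplit := intervalIntegral.integral_Iic_add_Ioi (b := (0 : ℝ)) hint.integrableOn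
    hint.integrableOn
  have hneg := integral_comp_neg_Ioi 0 fun s => imaginaryKernel s ^ m
  simp only [imaginaryKernel_neg, ← map_pow, integral_conj, neg_zero] at hneg
  rw [← hneg, integral_imaginaryKernel_pow hm] at hsplit
  have hre := congrArg Complex.re hsplit
  rw [Complex.add_re, Complex.conj_re, Complex.ofReal_re] at hre
  linarith

/-! ### The expansions -/

theorem isLaplaceKernel_realKernel {ω : ℝ} (hω : ω ^ 2 = 1) :
    IsLaplaceKernel (fun s => (realKernel (ω * s) : ℂ))
      (PowerSeries.rescale (ω : ℂ) phaseSeries) := by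
  have hω0 : ω ≠ 0 := by
    rintro rfl
    norm_num at hω
  have hint : IntegrableOn (fun s => realKernel (ω * s)) (Set.Ioi 0) := by
    simpa only [pow_one] using
      ((integrable_realKernel_pow one_ne_zero).comp_mul_left' hω0).integrableOn
  have hnorm (s : ℝ) : ‖(realKernel (ω * s) : ℂ)‖ = realKernel (ω * s) := by
    rw [Complex.norm_real, Real.norm_of_nonneg (realKernel_nonneg _)]
  refine isLaplaceKernel_of_eq_exp_log (Complex.ofReal_ne_zero.2 hω0)
    hint.ofReal.aestronglyMeasurable ⟨1, by simpa only [hnorm, pow_one] using hint⟩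
    (fun δ hδ => ⟨_, realKernel_lt_one (mul_ne_zero hω0 hδ.ne'), fun s hs => ?_⟩) ?_
  · rw [hnorm]
    refine realKernel_le_realKernel ?_
    rw [show ω * δ * (ω * s - ω * δ) = ω ^ 2 * (δ * (s - δ)) by ring, hω, one_mul]
    exact mul_nonneg hδ.le (sub_nonneg.2 hs.le)
  · have hpos : ∀ᶠ s in 𝓝[>] (0 : ℝ), 0 < 1 + ω * s :=
      nhdsWithin_le_nhds (ContinuousAt.eventually_lt (by fun_prop) (by fun_prop) (by simp))
    filter_upwards [hpos] with s hs
    have hexp : realKernel (ω * s) = Real.exp (Real.log (1 + ω * s) - ω * s) := by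
      rw [Real.exp_sub, Real.exp_log hs, realKernel, max_eq_left hs.le, Real.exp_neg,
        div_eq_mul_inv]
    rw [hexp, ← Complex.ofReal_pow, hω]
    push_cast [Complex.ofReal_log hs.le]
    rw [div_one]

theorem isLaplaceKernel_imaginaryKernel :
    IsLaplaceKernel imaginaryKernel (PowerSeries.rescale Complex.I phaseSeries) := by
  refine isLaplaceKernel_of_eq_exp_log Complex.I_ne_zero
    continuous_imaginaryKernel.aestronglyMeasurable ⟨2, ?_⟩ (fun δ hδ => ⟨(√(1 + δ ^ 2))⁻¹, ?_,
      fun s hs => ?_⟩) (.of_forall fun s => ?_)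
  · simpa only [norm_pow] using (integrable_imaginaryKernel_pow le_rfl).norm.integrableOn
  · exact inv_lt_one_of_one_lt₀ (Real.lt_sqrt_of_sq_lt (by nlinarith))
  · rw [norm_imaginaryKernel]
    gcongr
  · have hne : 1 + Complex.I * s ≠ 0 := fun hs => by simpa using congrArg Complex.re hs
    rw [Complex.I_sq, div_neg, div_one, neg_sub, Complex.exp_sub, Complex.exp_log hne,
      imaginaryKernel]

theorem hasAsymptoticExpansion_integral_realKernel {ω : ℝ} (hω : ω ^ 2 = 1) :
    HasAsymptoticExpansion (fun m : ℕ => √m * ∫ s in Set.Ioi 0, realKernel (ω * s) ^ m)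
      (.mk fun n => ω ^ n * (Real.Gamma ((n + 1) / 2) * laplaceCoeff n))
      (fun m : ℕ => (√m)⁻¹) atTop := by
  have h := (isLaplaceKernel_realKernel hω).hasAsymptoticExpansion
  simp only [← Complex.ofReal_inv, ← Complex.ofReal_pow, integral_complex_ofReal,
    ← Complex.ofReal_mul] at h
  simpa only [PowerSeries.coeff_mk, laplaceMethodCoeff_rescale_phaseSeries, ← Complex.ofReal_pow,
    ← Complex.ofReal_mul, Complex.ofReal_re] using h.re

theorem inv_sqrt_natCast_sq (m : ℕ) : (√(m : ℝ))⁻¹ ^ 2 = (m : ℝ)⁻¹ := by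
  rw [inv_pow, Real.sq_sqrt m.cast_nonneg]

theorem re_laplaceMethodCoeff_rescale_I_even (n : ℕ) :
    (laplaceMethodCoeff (PowerSeries.rescale Complex.I phaseSeries) (2 * n)).re =
      √(2 * Real.pi) / 2 * stirlingCoeff n := by
  have hI : Complex.I ^ (2 * n) = ((-1 : ℝ) ^ n : ℝ) := by simp [pow_mul]
  have hn : (((2 * n : ℕ) : ℝ) + 1) / 2 = n + 1 / 2 := by push_cast; ring
  rw [laplaceMethodCoeff_rescale_phaseSeries, hI, hn, ← Complex.ofReal_mul, Complex.ofReal_re]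
  linarith [sqrt_two_pi_mul_stirlingCoeff n]

theorem re_laplaceMethodCoeff_rescale_I_odd (n : ℕ) :
    (laplaceMethodCoeff (PowerSeries.rescale Complex.I phaseSeries) (2 * n + 1)).re = 0 := by
  have hI : Complex.I ^ (2 * n + 1) = ((-1 : ℝ) ^ n : ℝ) * Complex.I := by simp [pow_succ, pow_mul]
  rw [laplaceMethodCoeff_rescale_phaseSeries, hI, Complex.re_mul_ofReal, Complex.re_ofReal_mul,
    Complex.I_re, mul_zero, zero_mul]

theorem hasAsymptoticExpansion_poissonWeight :
    HasAsymptoticExpansion (fun m : ℕ => √(2 * Real.pi * m) * poissonWeight m)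
      (.mk stirlingCoeff) (fun m : ℕ => (m : ℝ)⁻¹) atTop := by
  have hpi : √(2 * Real.pi) ≠ 0 := (Real.sqrt_pos.2 Real.two_pi_pos).ne'
  have h := isLaplaceKernel_imaginaryKernel.hasAsymptoticExpansion
  simp only [← Complex.ofReal_inv] at h
  have heven := h.re.of_even (Q := PowerSeries.C (√(2 * Real.pi) / 2) * .mk stirlingCoeff)
    (by simpa using re_laplaceMethodCoeff_rescale_I_even)
    (by simpa using re_laplaceMethodCoeff_rescale_I_odd)
  simp only [inv_sqrt_natCast_sq] at heven
  have hmul := heven.const_mul tendsto_inv_atTop_nhds_zero_nat (2 / √(2 * Real.pi))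
  rw [← mul_assoc, ← map_mul, div_mul_div_cancel₀ hpi, div_self two_ne_zero, map_one,
    one_mul] at hmul
  refine hmul.congr' ?_
  filter_upwards [eventually_ge_atTop 2] with m hm
  have hre := two_mul_re_integral_Ioi_imaginaryKernel_pow hm
  rw [← Real.mul_self_sqrt Real.two_pi_pos.le] at hre
  rw [Complex.re_ofReal_mul, Real.sqrt_mul Real.two_pi_pos.le]
  field_simp
  linear_combination hre

theorem mk_sub_mk_neg_one_pow_mul (a : ℕ → ℝ) :
    PowerSeries.mk (fun n => 1 ^ n * a n) - .mk (fun n => (-1) ^ n * a n) =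
      PowerSeries.X * .mk fun n => (1 + (-1) ^ n) * a (n + 1) := by
  ext (_ | n)
  · simp
  · rw [PowerSeries.coeff_succ_X_mul]
    simp
    ring

theorem hasAsymptoticExpansion_gammaQ_div_poissonWeight :
    HasAsymptoticExpansion (fun m : ℕ => (gammaQ m m - 1 / 2) / poissonWeight m)
      (.mk (fun n => n.factorial * laplaceCoeff (2 * n + 1)) - 1) (fun m : ℕ => (m : ℝ)⁻¹)
      atTop := by
  have hlim : Tendsto (fun m : ℕ => (m : ℝ)⁻¹) atTop (𝓝 0) := tendsto_inv_atTop_nhds_zero_nat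
  have hsub := (hasAsymptoticExpansion_integral_realKernel (ω := 1) (by norm_num)).sub
    (hasAsymptoticExpansion_integral_realKernel (ω := -1) (by norm_num))
  rw [mk_sub_mk_neg_one_pow_mul] at hsub
  have hne : ∀ᶠ m : ℕ in atTop, (√(m : ℝ))⁻¹ ≠ 0 :=
    (eventually_ne_atTop 0).mono fun m hm => by positivity
  have hΓ (n : ℕ) : Real.Gamma (((2 * n + 1 : ℕ) + 1) / 2) = n.factorial := by
    rw [← Real.Gamma_nat_eq_factorial]
    push_cast
    ring_nf
  have heven := (hsub.div hne).of_even
    (Q := PowerSeries.C 2 * .mk fun n => n.factorial * laplaceCoeff (2 * n + 1))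
    (fun n => by
      rw [PowerSeries.coeff_mk, PowerSeries.coeff_C_mul, PowerSeries.coeff_mk, hΓ, pow_mul,
        neg_one_sq, one_pow, one_add_one_eq_two])
    (fun n => by simp [pow_succ])
  simp only [inv_sqrt_natCast_sq] at heven
  have hhalf := (heven.const_mul hlim (1 / 2)).sub (.of_eval hlim 1)
  rw [← mul_assoc, ← map_mul, one_div_mul_cancel two_ne_zero, map_one, one_mul,
    Polynomial.coe_one] at hhalf
  refine hhalf.congr' ?_
  filter_upwards [eventually_ne_atTop 0] with m hm
  rw [← mul_sub, integral_realKernel_pow_sub_integral_neg hm, Polynomial.eval_one]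
  have hsqrt : √(m : ℝ) * √m = m := Real.mul_self_sqrt m.cast_nonneg
  have hm0 : (m : ℝ) ≠ 0 := Nat.cast_ne_zero.2 hm
  calc 1 / 2 * (√m * (2 / m * ((gammaQ m m - 1 / 2) / poissonWeight m + 1)) / (√m)⁻¹) - 1
      = √m * √m / m * ((gammaQ m m - 1 / 2) / poissonWeight m + 1) - 1 := by
        rw [div_inv_eq_mul]
        ring
    _ = (gammaQ m m - 1 / 2) / poissonWeight m := by
        rw [hsqrt, div_self hm0, one_mul, add_sub_cancel_right]

theorem mk_C₀ : PowerSeries.mk C₀ =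
    .mk stirlingCoeff * (.mk (fun n => n.factorial * laplaceCoeff (2 * n + 1)) - 1) := by
  ext n
  rw [mul_sub, mul_one, map_sub, PowerSeries.coeff_mul,
    Finset.Nat.sum_antidiagonal_eq_sum_range_succ_mk]
  simp only [PowerSeries.coeff_mk, C₀, sub_eq_neg_add]
  congr 1
  refine Finset.sum_congr rfl fun k _ => ?_
  rw [Nat.mul_sub]
  ring

theorem hasAsymptoticExpansion_gammaQ :
    HasAsymptoticExpansion (fun m : ℕ => √(2 * Real.pi * m) * (gammaQ m m - 1 / 2))
      (.mk C₀) (fun m : ℕ => (m : ℝ)⁻¹) atTop := by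
  have h := hasAsymptoticExpansion_poissonWeight.mul tendsto_inv_atTop_nhds_zero_nat
    hasAsymptoticExpansion_gammaQ_div_poissonWeight
  rw [← mk_C₀] at h
  refine h.congr' ?_
  filter_upwards [eventually_ne_atTop 0] with m hm
  rw [mul_assoc, mul_div_cancel₀ _ (poissonWeight_pos hm).ne']

theorem isBigO_gammaQ_sub (N : ℕ) :
    (fun m : ℕ => gammaQ m m -
        (1 / 2 + 1 / √(2 * Real.pi * m) * ∑ n ∈ range N, C₀ n / (m : ℝ) ^ n)) =O[atTop]
      fun m : ℕ => 1 / √(2 * Real.pi * m) * (m : ℝ) ^ (-(N : ℝ)) := by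
  have h := (isBigO_refl (fun m : ℕ => 1 / √(2 * Real.pi * m)) atTop).mul
    (hasAsymptoticExpansion_gammaQ N)
  refine h.congr' ?_ (.of_forall fun m => ?_)
  · filter_upwards [eventually_ne_atTop 0] with m hm
    have hsqrt : √(2 * Real.pi * m) ≠ 0 := by positivity
    simp only [Polynomial.eval, PowerSeries.eval₂_trunc_eq_sum_range, RingHom.id_apply,
      PowerSeries.coeff_mk, inv_pow, ← div_eq_mul_inv]
    rw [mul_sub, ← mul_assoc, one_div_mul_cancel hsqrt, one_mul, sub_sub]
  · simp only [Real.rpow_neg m.cast_nonneg, Real.rpow_natCast, inv_pow]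

/-! ### The first coefficients -/

theorem coeff_F_sub_one_pow_succ (n k : ℕ) :
    ((F - 1) ^ (k + 1)).coeff (n + 1) =
      ∑ i ∈ range (n + 1), F.coeff (i + 1) * ((F - 1) ^ k).coeff (n - i) := by
  rw [pow_succ', PowerSeries.coeff_mul, Finset.Nat.sum_antidiagonal_eq_sum_range_succ_mk,
    Finset.sum_range_succ']
  simp [PowerSeries.coeff_one, constantCoeff_F]

theorem laplaceCoeff_two_mul_add_one (j : ℕ) :
    laplaceCoeff (2 * j + 1) = 2 ^ j * ∑ k ∈ range (2 * j + 2),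
      (-1) ^ k * ((j + k).choose k : ℝ) * ((F - 1) ^ k).coeff (2 * j + 1) := by
  have hΓ := Gamma_mul_laplaceCoeff (2 * j + 1)
  have hj : (((2 * j + 1 : ℕ) : ℝ) + 1) / 2 = j + 1 := by push_cast; ring
  have hsqrt : √(2 : ℝ) ^ (2 * j + 1 + 1) / 2 = 2 ^ j := by
    rw [add_assoc, ← two_mul, ← mul_add, pow_mul, Real.sq_sqrt zero_le_two, pow_succ]
    ring
  rw [hj, hsqrt, Real.Gamma_nat_eq_factorial] at hΓ
  have hfact : (j.factorial : ℝ) ≠ 0 := Nat.cast_ne_zero.2 j.factorial_ne_zero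
  refine mul_left_cancel₀ hfact (hΓ.trans ?_)
  rw [Finset.mul_sum, Finset.mul_sum]
  refine Finset.sum_congr rfl fun k _ => ?_
  rw [add_right_comm, ← Nat.cast_add, Real.Gamma_nat_eq_factorial,
    ← Nat.add_choose_mul_factorial_mul_factorial]
  push_cast
  field_simp

theorem stirlingCoeff_zero : stirlingCoeff 0 = 1 := by
  norm_num [stirlingCoeff, Fpow, gbinomR]

theorem stirlingCoeff_one : stirlingCoeff 1 = -1 / 12 := by
  norm_num [stirlingCoeff, Fpow, gbinomR, Finset.sum_range_succ, Finset.prod_range_succ,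
    coeff_F_sub_one_pow_succ, coeff_F, PowerSeries.coeff_one, constantCoeff_F, Nat.factorial]

theorem stirlingCoeff_two : stirlingCoeff 2 = 1 / 288 := by
  norm_num [stirlingCoeff, Fpow, gbinomR, Finset.sum_range_succ, Finset.prod_range_succ,
    coeff_F_sub_one_pow_succ, coeff_F, PowerSeries.coeff_one, constantCoeff_F, Nat.factorial]

theorem stirlingCoeff_three : stirlingCoeff 3 = 139 / 51840 := by
  norm_num [stirlingCoeff, Fpow, gbinomR, Finset.sum_range_succ, Finset.prod_range_succ,
    coeff_F_sub_one_pow_succ, coeff_F, PowerSeries.coeff_one, constantCoeff_F, Nat.factorial]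

theorem laplaceCoeff_one : laplaceCoeff 1 = 2 / 3 := by
  norm_num [laplaceCoeff_two_mul_add_one 0, Finset.sum_range_succ, coeff_F_sub_one_pow_succ,
    coeff_F, PowerSeries.coeff_one, constantCoeff_F, Nat.choose]

theorem laplaceCoeff_three : laplaceCoeff 3 = -4 / 135 := by
  norm_num [laplaceCoeff_two_mul_add_one 1, Finset.sum_range_succ, coeff_F_sub_one_pow_succ,
    coeff_F, PowerSeries.coeff_one, constantCoeff_F, Nat.choose]

theorem laplaceCoeff_five : laplaceCoeff 5 = 4 / 2835 := by
  norm_num [laplaceCoeff_two_mul_add_one 2, Finset.sum_range_succ, coeff_F_sub_one_pow_succ,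
    coeff_F, PowerSeries.coeff_one, constantCoeff_F, Nat.choose]

theorem laplaceCoeff_seven : laplaceCoeff 7 = 8 / 25515 := by
  norm_num [laplaceCoeff_two_mul_add_one 3, Finset.sum_range_succ, coeff_F_sub_one_pow_succ,
    coeff_F, PowerSeries.coeff_one, constantCoeff_F, Nat.choose]

theorem C₀_zero : C₀ 0 = -(1 / 3) := by
  norm_num [C₀, stirlingCoeff_zero, laplaceCoeff_one]

theorem C₀_one : C₀ 1 = -(1 / 540) := by
  norm_num [C₀, Finset.sum_range_succ, stirlingCoeff_zero, stirlingCoeff_one, laplaceCoeff_one,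
    laplaceCoeff_three]

theorem C₀_two : C₀ 2 = 25 / 6048 := by
  norm_num [C₀, Finset.sum_range_succ, stirlingCoeff_zero, stirlingCoeff_one, stirlingCoeff_two,
    laplaceCoeff_one, laplaceCoeff_three, laplaceCoeff_five]

theorem C₀_three : C₀ 3 = 101 / 155520 := by
  norm_num [C₀, Finset.sum_range_succ, stirlingCoeff_zero, stirlingCoeff_one, stirlingCoeff_two,
    stirlingCoeff_three, laplaceCoeff_one, laplaceCoeff_three, laplaceCoeff_five,
    laplaceCoeff_seven, Nat.factorial]

/-- Asymptotic expansion of `Γ(m,m)/Γ(m) = e^{-m} ∑_{k=0}^{m-1} m^k/k!` as the positive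
integer `m → ∞`: for every `N`,
`Γ(m,m)/Γ(m) = 1/2 + (1/√(2πm))(∑_{n=0}^{N-1} C_n(0) m^{-n} + O(m^{-N}))`; in particular
`C₀(0) = -1/3`, `C₁(0) = -1/540`, `C₂(0) = 25/6048`, `C₃(0) = 101/155520`. -/
theorem incompleteGamma_ratio_expansion (N : ℕ) :
    ((fun m : ℕ =>
        Real.exp (-(m : ℝ)) * ∑ k ∈ Finset.range m, (m : ℝ) ^ k / (Nat.factorial k : ℝ) -
          (1 / 2 + 1 / Real.sqrt (2 * Real.pi * m) *
            ∑ n ∈ Finset.range N, C₀ n / (m : ℝ) ^ n))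
      =O[atTop] fun m : ℕ => 1 / Real.sqrt (2 * Real.pi * m) * (m : ℝ) ^ (-(N : ℝ))) ∧
    C₀ 0 = -(1 / 3) ∧ C₀ 1 = -(1 / 540) ∧ C₀ 2 = 25 / 6048 ∧ C₀ 3 = 101 / 155520 :=
  ⟨isBigO_gammaQ_sub N, C₀_zero, C₀_one, C₀_two, C₀_three⟩
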